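/- (Lemma 1.4) Let d ≥ 3 and 1 ≤ m ≤ d−2. Then limsup_{N→∞} q_N ≤ q(d+1−m), where q_N = sup{P_z[H_F < T_{B̃_0}] : F ∈ L_m, z ∈ ∂F}. -/

import Mathlib

open MeasureTheory Filter
open scoped ENNReal Classical

namespace DiscCyl

/-- The lattice `ℤ^{d+1}`. -/
abbrev Lat (d : ℕ) := Fin (d + 1) → ℤ

/-- The discrete cylinder `E = (ℤ/Nℤ)^d × ℤ`. -/
abbrev Cyl (d N : ℕ) := (Fin d → ZMod N) × ℤ

instance (N : ℕ) : MeasurableSpace (ZMod N) := ⊤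

instance (N : ℕ) : Countable (ZMod N) := by
  cases N with
  | zero => exact inferInstanceAs (Countable ℤ)
  | succ n => exact inferInstanceAs (Countable (Fin (n + 1)))

/-- The canonical projection `π_E : ℤ^{d+1} → E`. -/
def projE (d N : ℕ) (v : Lat d) : Cyl d N :=
  (fun i => (v i.castSucc : ZMod N), v (Fin.last d))

/-- The `2(d+1)` unit vectors `±e_i` of `ℤ^{d+1}`. -/
def unitVecs (d : ℕ) : Finset (Lat d) :=
  Finset.image (fun p : Fin (d + 1) × Bool => Pi.single p.1 (if p.2 then (1 : ℤ) else -1))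
    Finset.univ

/-- One-step transition probability of simple random walk on the cylinder:
each of the `2(d+1)` unit moves of `ℤ^{d+1}` is taken with probability `1/(2(d+1))`
and projected to `E`. -/
noncomputable def stepProb (d N : ℕ) (x y : Cyl d N) : ℝ≥0∞ :=
  (((unitVecs d).filter fun e => x + projE d N e = y).card : ℝ≥0∞) / (2 * (d + 1))

/-- `Pl` is the family of laws (indexed by the starting point) of simple random walk
on the cylinder `E = (ℤ/Nℤ)^d × ℤ`. -/
def IsCylRW (d N : ℕ) (Pl : Cyl d N → Measure (ℕ → Cyl d N)) : Prop :=
  (∀ x, IsProbabilityMeasure (Pl x)) ∧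
    ∀ (x : Cyl d N) (n : ℕ) (γ : ℕ → Cyl d N),
      Pl x {ω | ∀ i ≤ n, ω i = γ i} =
        (if γ 0 = x then 1 else 0) * ∏ i ∈ Finset.range n, stepProb d N (γ i) (γ (i + 1))

/-- The lattice `ℤ^ν`. -/
abbrev ZLat (ν : ℕ) := Fin ν → ℤ

/-- Unit vectors of `ℤ^ν`. -/
def zUnitVecs (ν : ℕ) : Set (ZLat ν) :=
  {v | ∃ i, v = Pi.single i 1 ∨ v = Pi.single i (-1)}

/-- One-step transition probability of simple random walk on `ℤ^ν`. -/
noncomputable def zStep (ν : ℕ) (x y : ZLat ν) : ℝ≥0∞ :=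
  if y - x ∈ zUnitVecs ν then (2 * ν : ℝ≥0∞)⁻¹ else 0

/-- `Ql` is the family of laws of simple random walk on `ℤ^ν`. -/
def IsLatRW (ν : ℕ) (Ql : ZLat ν → Measure (ℕ → ZLat ν)) : Prop :=
  (∀ x, IsProbabilityMeasure (Ql x)) ∧
    ∀ (x : ZLat ν) (n : ℕ) (γ : ℕ → ZLat ν),
      Ql x {ω | ∀ i ≤ n, ω i = γ i} =
        (if γ 0 = x then 1 else 0) * ∏ i ∈ Finset.range n, zStep ν (γ i) (γ (i + 1))

/-- `q(ν)`: the return probability to the origin of simple random walk on `ℤ^ν`. -/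
noncomputable def retProb (ν : ℕ) (Ql : ZLat ν → Measure (ℕ → ZLat ν)) : ℝ :=
  ((Ql 0) {ω | ∃ n : ℕ, 1 ≤ n ∧ ω n = 0}).toReal

/-- Entrance time `H_U` (with value `⊤` if `U` is never entered). -/
noncomputable def entT {X : Type*} (U : Set X) (ω : ℕ → X) : ℕ∞ :=
  sInf {t : ℕ∞ | ∃ n : ℕ, ω n ∈ U ∧ t = n}

/-- Exit time `T_U`. -/
noncomputable def exitT {X : Type*} (U : Set X) (ω : ℕ → X) : ℕ∞ :=
  entT Uᶜ ω

/-- `after t f ω = t + f (θ_t ω)`, with value `⊤` when `t = ⊤`. -/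
noncomputable def after {X : Type*} (t : ℕ∞) (f : (ℕ → X) → ℕ∞) (ω : ℕ → X) : ℕ∞ :=
  t.recTopCoe ⊤ fun m => (m : ℕ∞) + f fun k => ω (k + m)

/-- The block `C_j = (ℤ/Nℤ)^d × ([(j-3/4)N, (j+3/4)N] ∩ ℤ)`. -/
def Cblk (d N : ℕ) (j : ℤ) : Set (Cyl d N) :=
  {x | ((j : ℝ) - 3 / 4) * N ≤ (x.2 : ℝ) ∧ (x.2 : ℝ) ≤ ((j : ℝ) + 3 / 4) * N}

/-- The block `B_j = (ℤ/Nℤ)^d × [(j-1)N, (j+1)N]`. -/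
def Bblk (d N : ℕ) (j : ℤ) : Set (Cyl d N) :=
  {x | (j - 1) * (N : ℤ) ≤ x.2 ∧ x.2 ≤ (j + 1) * (N : ℤ)}

/-- The block `B̃_j = (ℤ/Nℤ)^d × [(j-2)N+1, (j+2)N-1]`. -/
def Btl (d N : ℕ) (j : ℤ) : Set (Cyl d N) :=
  {x | (j - 2) * (N : ℤ) + 1 ≤ x.2 ∧ x.2 ≤ (j + 2) * (N : ℤ) - 1}

/-- `D^j_1`: time of the first departure from `B̃_j` after the first return to `B_j`. -/
noncomputable def oneExc (d N : ℕ) (j : ℤ) (ω : ℕ → Cyl d N) : ℕ∞ :=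
  after (entT (Bblk d N j) ω) (exitT (Btl d N j)) ω

/-- `D^j_k`: time of the `k`-th departure from `B̃_j` (after successive returns to `B_j`). -/
noncomputable def DD (d N : ℕ) (j : ℤ) : ℕ → (ℕ → Cyl d N) → ℕ∞
  | 0, _ => 0
  | k + 1, ω => after (DD d N j k ω) (oneExc d N j) ω

/-- The law `P` of the walk with initial distribution uniform on `B_0`. -/
noncomputable def lawP (d N : ℕ) (Pl : Cyl d N → Measure (ℕ → Cyl d N)) :
    Measure (ℕ → Cyl d N) :=
  ((N : ℝ≥0∞) ^ d * (2 * N + 1))⁻¹ •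
    Measure.sum fun x : Cyl d N => if x ∈ Bblk d N 0 then Pl x else 0

/-- Nearest-neighbour adjacency on the cylinder. -/
def adj (d N : ℕ) (x y : Cyl d N) : Prop :=
  x ≠ y ∧ ∃ e ∈ unitVecs d, y = x + projE d N e

/-- `x` and `y` are connected by a nearest-neighbour path inside `S`. -/
def connIn (d N : ℕ) (S : Set (Cyl d N)) (x y : Cyl d N) : Prop :=
  Relation.ReflTransGen (fun a b => a ∈ S ∧ b ∈ S ∧ adj d N a b) x y

/-- `S` is a connected set. -/
def IsConnIn (d N : ℕ) (S : Set (Cyl d N)) : Prop :=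
  ∀ x ∈ S, ∀ y ∈ S, connIn d N S x y

/-- The boundary `∂U`. -/
def bdry (d N : ℕ) (U : Set (Cyl d N)) : Set (Cyl d N) :=
  {x | x ∉ U ∧ ∃ y ∈ U, adj d N x y}

/-- `ℓ^∞`-norm on `ℤ^{d+1}`. -/
def linf {d : ℕ} (v : Lat d) : ℕ := Finset.univ.sup fun i => (v i).natAbs

/-- `ℓ^∞`-distance induced on the cylinder. -/
noncomputable def cylDist (d N : ℕ) (x y : Cyl d N) : ℕ :=
  sInf {r : ℕ | ∃ v : Lat d, projE d N v = y - x ∧ linf v = r}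

/-- `S` has `ℓ^∞`-diameter at least `L`. -/
def diamGE (d N : ℕ) (S : Set (Cyl d N)) (L : ℕ) : Prop :=
  ∃ x ∈ S, ∃ y ∈ S, L ≤ cylDist d N x y

/-- `X_{[0,n]}`: the set of points visited up to time `n`. -/
def ran {X : Type*} (ω : ℕ → X) (n : ℕ) : Set X := {y | ∃ i ≤ n, ω i = y}

/-- The set of points visited up to the (possibly infinite) time `t`. -/
def ranE {X : Type*} (ω : ℕ → X) (t : ℕ∞) : Set X :=
  {y | ∃ i : ℕ, (i : ℕ∞) ≤ t ∧ ω i = y}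

/-- `L_m`: projections to `E` of `m`-dimensional affine coordinate lattices of `ℤ^{d+1}`. -/
def Lcoll (d N m : ℕ) : Set (Set (Cyl d N)) :=
  {F | ∃ I : Finset (Fin (d + 1)), I.card = m ∧ ∃ y : Lat d,
      F = (fun v => projE d N (y + v)) '' {v : Lat d | ∀ i ∉ I, v i = 0}}

/-- `A^j_m`: nonempty subsets of `C_j` contained in some `F ∈ L_m`. -/
def Adm (d N : ℕ) (j : ℤ) (m : ℕ) : Set (Finset (Cyl d N)) :=
  {A | A.Nonempty ∧ ↑A ⊆ Cblk d N j ∧ ∃ F ∈ Lcoll d N m, (↑A : Set (Cyl d N)) ⊆ F}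

/-- The segment `{x + k·e : 0 ≤ k ≤ L}` (addition via `π_E`). -/
def segment (d N : ℕ) (x : Cyl d N) (e : Lat d) (L : ℕ) : Set (Cyl d N) :=
  {y | ∃ k : ℕ, k ≤ L ∧ y = x + projE d N ((k : ℤ) • e)}

/-- The event `V_{K,j,t}` (with `k = ⌊t⌋` excursions). -/
def Vev (d N : ℕ) (K : ℝ) (j : ℤ) (k : ℕ) : Set (ℕ → Cyl d N) :=
  {ω | ∀ x ∈ Cblk d N j, ∀ e ∈ unitVecs d, ∃ i : ℕ, (i : ℝ) < Real.sqrt N ∧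
      ∀ l : ℕ, i ≤ l → l ≤ i + ⌊K * Real.log N⌋₊ →
        x + projE d N ((l : ℤ) • e) ∉ ranE ω (DD d N j k ω)}

/-- The event `U_{K,j,t}` (with `k = ⌊t⌋` excursions). -/
def Uev (d N : ℕ) (K : ℝ) (j : ℤ) (k : ℕ) : Set (ℕ → Cyl d N) :=
  {ω | ∀ F ∈ Lcoll d N 2, ∀ n : ℕ, (n : ℕ∞) ≤ DD d N j k ω →
      ∀ O₁ O₂ : Set (Cyl d N),
        O₁ ⊆ (F ∩ Cblk d N j) \ ran ω n → O₂ ⊆ (F ∩ Cblk d N j) \ ran ω n →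
        IsConnIn d N O₁ → IsConnIn d N O₂ →
        diamGE d N O₁ ⌊K * Real.log N⌋₊ → diamGE d N O₂ ⌊K * Real.log N⌋₊ →
        ∀ p ∈ O₁, ∀ q ∈ O₂, connIn d N ((F ∩ Cblk d N j) \ ran ω n) p q}

/-- A (finite) set `S` disconnects the cylinder. -/
def Disconnects (d N : ℕ) (S : Set (Cyl d N)) : Prop :=
  S.Finite ∧ ∃ M₀ : ℕ, ∀ M : ℕ, M₀ ≤ M → ∀ x y : Cyl d N,
    (M : ℤ) ≤ x.2 → y.2 ≤ -(M : ℤ) → ¬ connIn d N Sᶜ x y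

/-- The disconnection time `T_N`. -/
noncomputable def discT (d N : ℕ) (ω : ℕ → Cyl d N) : ℕ∞ :=
  sInf {t : ℕ∞ | ∃ n : ℕ, Disconnects d N (ran ω n) ∧ t = n}

/-- `r ≤ t` for `t : ℕ∞` and a real threshold `r` (trivially true when `t = ⊤`). -/
def geReal (t : ℕ∞) (r : ℝ) : Prop := ∀ n : ℕ, t = (n : ℕ∞) → r ≤ n

/-- `r < t` for `t : ℕ∞` and a real threshold `r` (trivially true when `t = ⊤`). -/
def gtReal (t : ℕ∞) (r : ℝ) : Prop := ∀ n : ℕ, t = (n : ℕ∞) → r < n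

/-- `φ_j(z) = E_z[exp(λ Σ_{x∈A} 1{H_x < T_{B̃_j}})]`. -/
noncomputable def phi (d N : ℕ) (Pl : Cyl d N → Measure (ℕ → Cyl d N)) (j : ℤ) (lam : ℝ)
    (A : Finset (Cyl d N)) (z : Cyl d N) : ℝ :=
  ∫ ω, Real.exp (lam * ∑ x ∈ A, if entT {x} ω < exitT (Btl d N j) ω then (1 : ℝ) else 0)
    ∂(Pl z)

/-- `‖φ_j‖_∞`. -/
noncomputable def phiSup (d N : ℕ) (Pl : Cyl d N → Measure (ℕ → Cyl d N)) (j : ℤ) (lam : ℝ)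
    (A : Finset (Cyl d N)) : ℝ :=
  ⨆ z : Cyl d N, phi d N Pl j lam A z

/-- `q_N = sup {P_z[H_F < T_{B̃_j}] : F ∈ L_m, z ∈ ∂F}`. -/
noncomputable def qNval (d N m : ℕ) (Pl : Cyl d N → Measure (ℕ → Cyl d N)) (j : ℤ) : ℝ :=
  sSup {r : ℝ | ∃ F ∈ Lcoll d N m, ∃ z ∈ bdry d N F,
      r = ((Pl z) {ω | entT F ω < exitT (Btl d N j) ω}).toReal}

/-- The times `τ_k`: `τ_0` is the entrance time of `(ℤ/Nℤ)^d × Nℤ`, and `τ_{k+1}` is the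
first time after `τ_k` at which the vertical component has moved by exactly `N`. -/
noncomputable def tauT (d N : ℕ) : ℕ → (ℕ → Cyl d N) → ℕ∞
  | 0, ω => entT {x : Cyl d N | (N : ℤ) ∣ x.2} ω
  | k + 1, ω =>
      (tauT d N k ω).recTopCoe ⊤ fun m =>
        sInf {t : ℕ∞ | ∃ n : ℕ, m < n ∧ ((ω n).2 - (ω m).2).natAbs = N ∧ t = n}

/-- `*`-adjacency on `ℤ²`. -/
def starAdj (x y : ℤ × ℤ) : Prop :=
  x ≠ y ∧ (x.1 - y.1).natAbs ≤ 1 ∧ (x.2 - y.2).natAbs ≤ 1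

/-!
A set `F ∈ L_m` fixes `r = d + 1 - m ≥ 3` coordinates, and a neighbour `z` of `F` is one unit step
away from `F` in these transverse coordinates. Seen through them the walk is a slowed down simple
random walk on `ℤ^r` (wrapped around mod `N`), so as long as it makes fewer than `N` steps it hits
`F` with probability at most that of hitting the origin of `ℤ^r` from a unit vector, that is,
`q(r)`.

Fix `A` and `n₀`. A visit to `F` before leaving `B̃` takes place before time `n₀`, which the
comparison above bounds by `q(r)` once `N > n₀ + 1`, or between times `n₀` and `A N²`, or else the
walk stays in `B̃` up to time `A N²`, which has probability `O(1 / A)` because the squared height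
grows linearly in mean. For the intermediate times, Fourier inversion on `(ℤ/Nℤ)^3` gives the
on-diagonal heat kernel bound `C n^{-3/2}` for `n ≤ A N²`, uniformly in `N`, whose sum over `n > n₀`
is small for large `n₀`.
-/

open scoped BigOperators

section Paths

variable {X : Type*}

/-- The event that the path `ω` visits `A` at some time in `[0, n]`. -/
def hitBy (A : Set X) (n : ℕ) : Set (ℕ → X) := {ω | ∃ k ≤ n, ω k ∈ A}

/-- The event that the path `ω` remains in `A` throughout `[0, n]`. -/
def stayIn (A : Set X) (n : ℕ) : Set (ℕ → X) := {ω | ∀ k ≤ n, ω k ∈ A}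

/-- The time shift `θ₁` on path space. -/
def shift (ω : ℕ → X) : ℕ → X := fun k => ω (k + 1)

theorem hitBy_mono (A : Set X) : Monotone (hitBy A) :=
  fun _ _ hmn _ ⟨k, hk, hA⟩ => ⟨k, hk.trans hmn, hA⟩

theorem mem_hitBy_of_zero_mem {A : Set X} {ω : ℕ → X} (h : ω 0 ∈ A) (n : ℕ) : ω ∈ hitBy A n :=
  ⟨0, Nat.zero_le n, h⟩

theorem mem_hitBy_zero {A : Set X} {ω : ℕ → X} : ω ∈ hitBy A 0 ↔ ω 0 ∈ A := by
  simp [hitBy]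

theorem mem_hitBy_succ {A : Set X} {n : ℕ} {ω : ℕ → X} :
    ω ∈ hitBy A (n + 1) ↔ ω 0 ∈ A ∨ shift ω ∈ hitBy A n := by
  refine ⟨?_, ?_⟩
  · rintro ⟨_ | k, hk, hA⟩
    exacts [.inl hA, .inr ⟨k, by omega, hA⟩]
  · rintro (h | ⟨k, hk, hA⟩)
    exacts [mem_hitBy_of_zero_mem h _, ⟨k + 1, by omega, hA⟩]

theorem mem_stayIn_succ {A : Set X} {n : ℕ} {ω : ℕ → X} :
    ω ∈ stayIn A (n + 1) ↔ ω 0 ∈ A ∧ shift ω ∈ stayIn A n := by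
  refine ⟨fun h => ⟨h 0 (Nat.zero_le _), fun k hk => h (k + 1) (by omega)⟩, ?_⟩
  rintro ⟨h₀, h⟩ (_ | k) hk
  exacts [h₀, h k (by omega)]

theorem measurable_shift [MeasurableSpace X] : Measurable (shift : (ℕ → X) → ℕ → X) :=
  measurable_pi_lambda _ fun _ => measurable_pi_apply _

theorem entT_le_iff {F : Set X} {ω : ℕ → X} {n : ℕ} : entT F ω ≤ n ↔ ω ∈ hitBy F n := by
  constructor
  · intro h
    have hne : {t : ℕ∞ | ∃ k : ℕ, ω k ∈ F ∧ t = k}.Nonempty := by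
      by_contra hempty
      rw [entT, Set.not_nonempty_iff_eq_empty.1 hempty, sInf_empty] at h
      exact absurd h (not_le.2 (ENat.natCast_lt_top n))
    obtain ⟨k, hF, hk : entT F ω = k⟩ := csInf_mem hne
    exact ⟨k, Nat.cast_le.1 (hk ▸ h), hF⟩
  · rintro ⟨k, hk, hF⟩
    have : entT F ω ≤ k := sInf_le ⟨k, hF, rfl⟩
    exact this.trans (Nat.cast_le.2 hk)

theorem entT_lt_exitT_iff {F B : Set X} {ω : ℕ → X} :
    entT F ω < exitT B ω ↔ ∃ n, ω n ∈ F ∧ ω ∈ stayIn B n := by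
  have lt_exitT_iff (n : ℕ) : (n : ℕ∞) < exitT B ω ↔ ω ∈ stayIn B n := by
    rw [exitT, ← not_le, entT_le_iff]
    simp [hitBy, stayIn]
  refine ⟨fun h => ?_, fun ⟨n, hF, hB⟩ => ?_⟩
  · obtain ⟨n, hn⟩ := ENat.ne_top_iff_exists.1 h.ne_top
    obtain ⟨k, hk, hF⟩ := entT_le_iff.1 hn.ge
    exact ⟨k, hF, fun i hi => (lt_exitT_iff n).1 (hn ▸ h) i (hi.trans hk)⟩
  · exact (entT_le_iff.2 ⟨n, le_rfl, hF⟩).trans_lt ((lt_exitT_iff n).2 hB)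

theorem real_entT_lt_exitT_le [MeasurableSpace X] (μ : Measure (ℕ → X)) [IsFiniteMeasure μ]
    {F F' : Set X} (hF : F ⊆ F') (B : Set X) (n₀ M : ℕ) :
    μ.real {ω | entT F ω < exitT B ω} ≤
      μ.real (hitBy F' n₀) + ∑ n ∈ Finset.Ioc n₀ M, μ.real {ω | ω n ∈ F'} +
        μ.real (stayIn B M) := by
  have hcover : {ω | entT F ω < exitT B ω} ⊆
      (hitBy F' n₀ ∪ ⋃ n ∈ Finset.Ioc n₀ M, {ω | ω n ∈ F'}) ∪ stayIn B M := by
    intro ω hω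
    obtain ⟨n, hnF, hnB⟩ := entT_lt_exitT_iff.1 hω
    rcases le_or_gt n n₀ with hn₀ | hn₀
    · exact .inl (.inl ⟨n, hn₀, hF hnF⟩)
    rcases le_or_gt n M with hM | hM
    · exact .inl (.inr (Set.mem_biUnion (by simp [hn₀, hM]) (hF hnF)))
    · exact .inr fun k hk => hnB k (hk.trans hM.le)
  calc μ.real {ω | entT F ω < exitT B ω}
      ≤ μ.real ((hitBy F' n₀ ∪ ⋃ n ∈ Finset.Ioc n₀ M, {ω | ω n ∈ F'}) ∪ stayIn B M) :=
        measureReal_mono hcover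
    _ ≤ _ := (measureReal_union_le _ _).trans <| add_le_add_left
        ((measureReal_union_le _ _).trans <|
          add_le_add_right (measureReal_biUnion_finset_le _ _) _) _

end Paths

section Measurability

variable {X : Type*} [MeasurableSpace X] [DiscreteMeasurableSpace X]

theorem measurableSet_coord_mem (A : Set X) (n : ℕ) : MeasurableSet {ω : ℕ → X | ω n ∈ A} :=
  measurable_pi_apply n (MeasurableSet.of_discrete (s := A))

theorem measurableSet_hitBy (A : Set X) (n : ℕ) : MeasurableSet (hitBy A n) := by
  have : hitBy A n = ⋃ k ∈ Set.Iic n, {ω | ω k ∈ A} := by ext; simp [hitBy]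
  rw [this]
  exact MeasurableSet.biUnion (Set.to_countable _) fun k _ => measurableSet_coord_mem A k

theorem measurableSet_stayIn (A : Set X) (n : ℕ) : MeasurableSet (stayIn A n) := by
  have : stayIn A n = ⋂ k ∈ Set.Iic n, {ω | ω k ∈ A} := by ext; simp [stayIn]
  rw [this]
  exact MeasurableSet.biInter (Set.to_countable _) fun k _ => measurableSet_coord_mem A k

variable [Countable X]

theorem ext_of_cylinder {μ ν : Measure (ℕ → X)} [IsFiniteMeasure ν]
    (h : ∀ (n : ℕ) (γ : ℕ → X), μ {ω | ∀ i ≤ n, ω i = γ i} = ν {ω | ∀ i ≤ n, ω i = γ i}) :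
    μ = ν := by
  have hν : IsProjectiveMeasureFamily fun I : Finset ℕ => ν.map I.restrict :=
    ProbabilityTheory.isProjectiveMeasureFamily_map_restrict
      (X := fun (t : ℕ) (ω : ℕ → X) => ω t) fun t => (measurable_pi_apply t).aemeasurable
  refine IsProjectiveLimit.unique ((isProjectiveLimit_nat_iff hν μ).2 fun n => ?_) fun I => rfl
  refine Measure.ext_of_singleton fun g => ?_
  let γ (i : ℕ) : X := g ⟨min i n, by simp⟩
  have hγ : Preorder.frestrictLe (π := fun _ => X) n ⁻¹' {g} =
      {ω | ∀ i ≤ n, ω i = γ i} := by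
    ext ω
    simp only [Set.mem_preimage, Set.mem_singleton_iff, funext_iff, Subtype.forall, Finset.mem_Iic]
    exact forall₂_congr fun i hi => by simp [γ, min_eq_left hi]
  rw [Measure.map_apply (by fun_prop) (by measurability),
    Measure.map_apply (by fun_prop) (by measurability)]
  exact (congrArg μ hγ).trans ((h n γ).trans (congrArg ν hγ).symm)

end Measurability

/-- `P` is the family of laws, indexed by the starting point, of the random walk whose increments
are `st i` with `i` uniform. The Markov property is required at time one only. -/
structure IsRandomWalk {X ι : Type*} [MeasurableSpace X] [Add X] [Fintype ι]
    (st : ι → X) (P : X → Measure (ℕ → X)) : Prop where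
  isProbabilityMeasure : ∀ x, IsProbabilityMeasure (P x)
  ae_zero_eq : ∀ x, ∀ᵐ ω ∂P x, ω 0 = x
  map_shift : ∀ x, (P x).map shift = (Fintype.card ι : ℝ≥0∞)⁻¹ • ∑ i, P (x + st i)

namespace IsRandomWalk

section Basic

variable {X ι : Type*} [MeasurableSpace X] [Add X] [Fintype ι] {st : ι → X}
  {P : X → Measure (ℕ → X)}

theorem real_congr (h : IsRandomWalk st P) {S T : Set (ℕ → X)} {x : X}
    (hST : ∀ ω, ω 0 = x → (ω ∈ S ↔ ω ∈ T)) :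
    (P x).real S = (P x).real T :=
  measureReal_congr ((h.ae_zero_eq x).mono fun ω hω => propext (hST ω hω))

theorem real_eq_expect (h : IsRandomWalk st P) {S T : Set (ℕ → X)} {x : X} (hS : MeasurableSet S)
    (hST : ∀ ω, ω 0 = x → (ω ∈ T ↔ shift ω ∈ S)) :
    (P x).real T = 𝔼 i, (P (x + st i)).real S := by
  have := h.isProbabilityMeasure
  rw [h.real_congr (T := shift ⁻¹' S) hST, ← map_measureReal_apply measurable_shift hS,
    h.map_shift, measureReal_ennreal_smul_apply, Fintype.expect_eq_sum_div_card]
  simp [Measure.real, ENNReal.toReal_sum, div_eq_inv_mul]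

theorem real_coord_zero (h : IsRandomWalk st P) (A : Set X) (x : X) :
    (P x).real {ω | ω 0 ∈ A} = A.indicator 1 x := by
  have := h.isProbabilityMeasure
  by_cases hx : x ∈ A
  · rw [h.real_congr (T := Set.univ) fun ω hω => by simp [hω, hx], probReal_univ]
    simp [hx]
  · rw [h.real_congr (T := ∅) fun ω hω => by simp [hω, hx], measureReal_empty]
    simp [hx]

theorem real_hitBy_of_mem (h : IsRandomWalk st P) {A : Set X} {x : X} (hx : x ∈ A) (n : ℕ) :
    (P x).real (hitBy A n) = 1 := by
  have := h.isProbabilityMeasure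
  rw [h.real_congr (T := Set.univ) fun ω hω => by simp [mem_hitBy_of_zero_mem, hω, hx],
    probReal_univ]

theorem real_hitBy_zero_of_notMem (h : IsRandomWalk st P) {A : Set X} {x : X} (hx : x ∉ A) :
    (P x).real (hitBy A 0) = 0 := by
  rw [h.real_congr (T := ∅) fun ω hω => by simp [mem_hitBy_zero, hω, hx], measureReal_empty]

theorem real_stayIn_of_notMem (h : IsRandomWalk st P) {A : Set X} {x : X} (hx : x ∉ A) (n : ℕ) :
    (P x).real (stayIn A n) = 0 := by
  rw [h.real_congr (T := ∅) fun ω hω => ?_, measureReal_empty]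
  exact iff_of_false (fun hA => hx (hω ▸ hA 0 (Nat.zero_le n))) (Set.notMem_empty ω)

variable [DiscreteMeasurableSpace X]

theorem of_cylinder [DecidableEq X] [Countable X] [Nonempty ι] {p : X → X → ℝ≥0∞}
    (hp : ∀ x y, p x y = (Finset.univ.filter fun i => x + st i = y).card / Fintype.card ι)
    (hprob : ∀ x, IsProbabilityMeasure (P x))
    (hcyl : ∀ (x : X) (n : ℕ) (γ : ℕ → X), P x {ω | ∀ i ≤ n, ω i = γ i} =
      (if γ 0 = x then 1 else 0) * ∏ i ∈ Finset.range n, p (γ i) (γ (i + 1))) :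
    IsRandomWalk st P := by
  have ae_zero_eq (x : X) : ∀ᵐ ω ∂P x, ω 0 = x := by
    have hstart := hcyl x 0 fun _ => x
    simp only [nonpos_iff_eq_zero, forall_eq, if_true, Finset.range_zero, Finset.prod_empty,
      mul_one] at hstart
    exact (prob_compl_eq_zero_iff (measurableSet_coord_mem {x} 0)).2 hstart
  refine ⟨hprob, ae_zero_eq, fun x => ?_⟩
  have : IsFiniteMeasure ((Fintype.card ι : ℝ≥0∞)⁻¹ • ∑ i, P (x + st i)) :=
    Measure.smul_finite _ (ENNReal.inv_ne_top.2 (by simp))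
  refine ext_of_cylinder fun n γ => ?_
  have hmeas : MeasurableSet {ω : ℕ → X | ∀ i ≤ n, ω i = γ i} := by
    measurability
  have hcons : P x (shift ⁻¹' {ω | ∀ i ≤ n, ω i = γ i}) =
      P x {ω | ∀ i ≤ n + 1, ω i = (fun k => Nat.casesOn k x γ : ℕ → X) i} := by
    refine measure_congr ?_
    filter_upwards [ae_zero_eq x] with ω hω
    refine propext ⟨fun h => ?_, fun h i hi => h (i + 1) (by omega)⟩
    rintro (_ | i) hi
    exacts [hω, h i (by omega)]
  rw [Measure.map_apply measurable_shift hmeas, hcons, hcyl, Finset.prod_range_succ']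
  simp only [Measure.smul_apply, Measure.finsetSum_apply, smul_eq_mul, hcyl, ← Finset.sum_mul,
    Finset.sum_boole, hp, eq_comm (a := γ 0), ENNReal.div_eq_inv_mul, Nat.rec_zero, if_true]
  ring

theorem real_coord_succ (h : IsRandomWalk st P) (A : Set X) (n : ℕ) (x : X) :
    (P x).real {ω | ω (n + 1) ∈ A} = 𝔼 i, (P (x + st i)).real {ω | ω n ∈ A} :=
  h.real_eq_expect (measurableSet_coord_mem A n) fun _ _ => Iff.rfl

theorem real_hitBy_succ_of_notMem (h : IsRandomWalk st P) {A : Set X} {x : X} (hx : x ∉ A) (n : ℕ) :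
    (P x).real (hitBy A (n + 1)) = 𝔼 i, (P (x + st i)).real (hitBy A n) :=
  h.real_eq_expect (measurableSet_hitBy A n) fun ω hω => by simp [mem_hitBy_succ, hω, hx]

theorem real_stayIn_succ_of_mem (h : IsRandomWalk st P) {A : Set X} {x : X} (hx : x ∈ A) (n : ℕ) :
    (P x).real (stayIn A (n + 1)) = 𝔼 i, (P (x + st i)).real (stayIn A n) :=
  h.real_eq_expect (measurableSet_stayIn A n) fun ω hω => by simp [mem_stayIn_succ, hω, hx]

theorem real_hitBy_map (h : IsRandomWalk st P) {Y ι' F : Type*} [MeasurableSpace Y]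
    [DiscreteMeasurableSpace Y] [Add Y] [Fintype ι'] {st' : ι' → Y} {P' : Y → Measure (ℕ → Y)}
    (h' : IsRandomWalk st' P') [FunLike F X Y] [AddHomClass F X Y] (φ : F) (e : ι ≃ ι')
    (hφ : ∀ i, φ (st i) = st' (e i)) (A : Set Y) (n : ℕ) (x : X) :
    (P' (φ x)).real (hitBy A n) = (P x).real (hitBy (φ ⁻¹' A) n) := by
  induction n generalizing x with
  | zero =>
    by_cases hx : φ x ∈ A
    · rw [h'.real_hitBy_of_mem hx, h.real_hitBy_of_mem hx]
    · rw [h'.real_hitBy_zero_of_notMem hx, h.real_hitBy_zero_of_notMem hx]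
  | succ n ih =>
    by_cases hx : φ x ∈ A
    · rw [h'.real_hitBy_of_mem hx, h.real_hitBy_of_mem hx]
    · rw [h'.real_hitBy_succ_of_notMem hx, h.real_hitBy_succ_of_notMem hx]
      exact (Fintype.expect_equiv e _ _ fun i => by rw [← ih, map_add, hφ]).symm

theorem natCast_mul_real_stayIn_le (h : IsRandomWalk st P) {A : Set X} {f : X → ℝ}
    (hf : ∀ x ∈ A, 𝔼 i, f (x + st i) + 1 ≤ f x) (hf₀ : ∀ x ∈ A, ∀ i, 0 ≤ f (x + st i))
    (n : ℕ) {x : X} (hx : 0 ≤ f x) : n * (P x).real (stayIn A n) ≤ f x := by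
  have := h.isProbabilityMeasure
  induction n generalizing x with
  | zero => simpa using hx
  | succ n ih =>
    by_cases hxA : x ∈ A
    · calc ((n + 1 : ℕ) : ℝ) * (P x).real (stayIn A (n + 1))
          = 𝔼 i, n * (P (x + st i)).real (stayIn A n) + (P x).real (stayIn A (n + 1)) := by
            rw [← Finset.mul_expect, ← h.real_stayIn_succ_of_mem hxA]
            push_cast
            ring
        _ ≤ 𝔼 i, f (x + st i) + 1 := by
            gcongr with i
            exacts [ih (hf₀ x hxA i), measureReal_le_one]
        _ ≤ f x := hf x hxA
    · simpa [h.real_stayIn_of_notMem hxA] using hx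

end Basic

theorem real_coord_eq_expect_char {X ι : Type*} [MeasurableSpace X]
    [DiscreteMeasurableSpace X] [AddMonoid X] [Fintype ι] {st : ι → X} {P : X → Measure (ℕ → X)}
    (h : IsRandomWalk st P) {κ : Type*} [Fintype κ] {A : Set X} {c : κ → ℂ}
    {χ : κ → AddChar X ℂ} (hA : ∀ x, A.indicator 1 x = 𝔼 k, c k * χ k x) (n : ℕ) (x : X) :
    ((P x).real {ω | ω n ∈ A} : ℂ) = 𝔼 k, c k * (𝔼 i, χ k (st i)) ^ n * χ k x := by
  induction n generalizing x with
  | zero =>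
    simp only [pow_zero, mul_one, ← hA, h.real_coord_zero]
    by_cases hx : x ∈ A <;> simp [hx]
  | succ n ih =>
    rw [h.real_coord_succ, Complex.ofReal_expect]
    simp only [ih, AddChar.map_add_eq_mul]
    rw [Finset.expect_comm]
    refine Finset.expect_congr rfl fun k _ => ?_
    simp only [← mul_assoc, ← Finset.mul_expect]
    ring

end IsRandomWalk

section SignedUnit

variable {n r : ℕ}

/-- The signed unit vector `±e_i` of `ℤ^n`; the sign is positive for `(i, true)`. -/
def signedUnit (p : Fin n × Bool) : Fin n → ℤ := Pi.single p.1 (if p.2 then 1 else -1)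

theorem signedUnit_injective : Function.Injective (signedUnit (n := n)) := by
  rintro ⟨i, b⟩ ⟨j, c⟩ h
  have hi := congrFun h i
  simp only [signedUnit, Pi.single_apply] at hi
  grind

theorem abs_signedUnit_apply_le (p : Fin n × Bool) (i : Fin n) : |signedUnit p i| ≤ 1 := by
  simp only [signedUnit, Pi.single_apply]
  split_ifs <;> simp

theorem signedUnit_comp_of_injective {σ : Fin r → Fin n} (hσ : σ.Injective) (q : Fin r × Bool) :
    signedUnit (q.map σ id) ∘ σ = signedUnit q := by
  ext a
  simp [signedUnit, Pi.single_apply, hσ.eq_iff]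

theorem signedUnit_comp_of_notMem_range {σ : Fin r → Fin n} {p : Fin n × Bool}
    (hp : p.1 ∉ Set.range σ) : signedUnit p ∘ σ = 0 := by
  ext a
  have : σ a ≠ p.1 := fun h => hp ⟨a, h⟩
  simp [signedUnit, this]

theorem mul_expect_signedUnit_comp {K : Type*} [Field K] [CharZero K] {σ : Fin r → Fin n}
    (hσ : σ.Injective) (g : (Fin r → ℤ) → K) :
    n * 𝔼 p : Fin n × Bool, (g (signedUnit p ∘ σ) - g 0) =
      r * 𝔼 q : Fin r × Bool, (g (signedUnit q) - g 0) := by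
  have hsum : ∑ q : Fin r × Bool, (g (signedUnit q) - g 0) =
      ∑ p : Fin n × Bool, (g (signedUnit p ∘ σ) - g 0) := by
    refine Fintype.sum_of_injective (Prod.map σ id) (hσ.prodMap Function.injective_id) _ _
      (fun p hp => ?_) fun q => by rw [signedUnit_comp_of_injective hσ]
    rw [signedUnit_comp_of_notMem_range, sub_self]
    rintro ⟨a, ha⟩
    exact hp ⟨(a, p.2), Prod.ext ha rfl⟩
  rw [← Fintype.card_mul_expect, ← Fintype.card_mul_expect] at hsum
  refine mul_left_cancel₀ (two_ne_zero' K) ?_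
  simp only [Fintype.card_prod, Fintype.card_fin, Fintype.card_bool, Nat.cast_mul,
    Nat.cast_ofNat] at hsum
  linear_combination -hsum

theorem expect_signedUnit_comp_le [NeZero r] {σ : Fin r → Fin n} (hσ : σ.Injective)
    {g : (Fin r → ℤ) → ℝ} (hg : g 0 ≤ 𝔼 q : Fin r × Bool, g (signedUnit q)) :
    𝔼 p : Fin n × Bool, g (signedUnit p ∘ σ) ≤ 𝔼 q : Fin r × Bool, g (signedUnit q) := by
  have hrn : r ≤ n := by simpa using Fintype.card_le_of_injective σ hσ
  have hr : 0 < r := NeZero.pos r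
  have : NeZero n := ⟨(hr.trans_le hrn).ne'⟩
  have key := mul_expect_signedUnit_comp hσ g
  rw [Finset.expect_sub_distrib, Finset.expect_sub_distrib, Fintype.expect_const,
    Fintype.expect_const] at key
  have hr' : (0 : ℝ) < r := Nat.cast_pos.2 hr
  have hrn' : (r : ℝ) ≤ n := Nat.cast_le.2 hrn
  nlinarith

theorem mem_zUnitVecs_iff {v : ZLat n} : v ∈ zUnitVecs n ↔ ∃ p, signedUnit p = v := by
  refine ⟨?_, ?_⟩
  · rintro ⟨i, rfl | rfl⟩
    exacts [⟨(i, true), rfl⟩, ⟨(i, false), rfl⟩]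
  · rintro ⟨⟨i, _ | _⟩, rfl⟩
    exacts [⟨i, .inr rfl⟩, ⟨i, .inl rfl⟩]

theorem IsLatRW.isRandomWalk [NeZero n] {Q : ZLat n → Measure (ℕ → ZLat n)} (hQ : IsLatRW n Q) :
    IsRandomWalk signedUnit Q := by
  refine .of_cylinder (p := zStep n) (fun x y => ?_) hQ.1 hQ.2
  have hcard : (Finset.univ.filter fun p => x + signedUnit p = y).card =
      if y - x ∈ zUnitVecs n then 1 else 0 := by
    simp only [← eq_sub_iff_add_eq', mem_zUnitVecs_iff]
    split_ifs with hp
    · obtain ⟨p, hp⟩ := hp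
      simp [← hp, signedUnit_injective.eq_iff, Finset.filter_eq']
    · simpa using hp
  rw [hcard, zStep]
  split_ifs <;> simp [mul_comm]

theorem IsCylRW.isRandomWalk {d N : ℕ} {P : Cyl d N → Measure (ℕ → Cyl d N)}
    (hP : IsCylRW d N P) : IsRandomWalk (fun p => projE d N (signedUnit p)) P := by
  refine .of_cylinder (p := stepProb d N) (fun x y => ?_) hP.1 hP.2
  have himage : unitVecs d = Finset.univ.image signedUnit := rfl
  rw [stepProb, himage, Finset.filter_image, Finset.card_image_of_injective _ signedUnit_injective]
  simp [mul_comm]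

end SignedUnit

section Lattice

variable {n : ℕ}

theorem exists_addEquiv_map_signedUnit (p q : Fin n × Bool) :
    ∃ (φ : (Fin n → ℤ) ≃+ (Fin n → ℤ)) (e : Equiv.Perm (Fin n × Bool)),
      e p = q ∧ ∀ i, φ (signedUnit i) = signedUnit (e i) := by
  let s : Equiv.Perm (Fin n) := Equiv.swap p.1 q.1
  by_cases hpq : p.2 = q.2
  · refine ⟨AddEquiv.arrowCongr s (AddEquiv.refl ℤ), s.prodCongr (Equiv.refl Bool),
      Prod.ext (Equiv.swap_apply_left _ _) hpq, fun i => ?_⟩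
    ext a
    simp [signedUnit, Pi.single_apply, Equiv.symm_apply_eq]
  · refine ⟨AddEquiv.arrowCongr s (AddEquiv.neg ℤ), s.prodCongr Equiv.boolNot,
      Prod.ext (Equiv.swap_apply_left _ _) (by simpa using Bool.eq_not_of_ne hpq), fun i => ?_⟩
    ext a
    simp only [signedUnit, Pi.single_apply, AddEquiv.arrowCongr_apply, Equiv.symm_apply_eq,
      Equiv.prodCongr_apply, Prod.map_fst, Prod.map_snd, AddEquiv.neg_apply, Equiv.boolNot_apply]
    grind

theorem IsLatRW.real_hitBy_signedUnit_le_retProb {Q : ZLat n → Measure (ℕ → ZLat n)}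
    (hQ : IsLatRW n Q) (p : Fin n × Bool) (k : ℕ) :
    (Q (signedUnit p)).real (hitBy {0} k) ≤ retProb n Q := by
  have : NeZero n := ⟨by rintro rfl; exact p.1.elim0⟩
  have hwalk := hQ.isRandomWalk
  have hprob := hQ.1
  have symm (q : Fin n × Bool) :
      (Q (signedUnit q)).real (hitBy {0} k) = (Q (signedUnit p)).real (hitBy {0} k) := by
    obtain ⟨φ, e, rfl, hφ⟩ := exists_addEquiv_map_signedUnit p q
    rw [← hφ, hwalk.real_hitBy_map hwalk φ e hφ]
    congr 2
    ext v
    simp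
  calc (Q (signedUnit p)).real (hitBy {0} k)
      = 𝔼 q, (Q (0 + signedUnit q)).real (hitBy {0} k) := by
        simp only [zero_add, symm, Fintype.expect_const]
    _ = (Q 0).real (shift ⁻¹' hitBy {0} k) :=
        (hwalk.real_eq_expect (measurableSet_hitBy _ _) fun _ _ => Iff.rfl).symm
    _ ≤ retProb n Q := by
        refine measureReal_mono ?_
        rintro ω ⟨i, -, hi⟩
        exact ⟨i + 1, by omega, hi⟩

end Lattice

instance (N : ℕ) : DiscreteMeasurableSpace (ZMod N) := ⟨fun _ => trivial⟩

section Transverse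

variable {d N r : ℕ}

/-- The residues mod `N` of the coordinates of a point of the cylinder selected by `σ`; the vertical
coordinate, of index `Fin.last d`, is reduced mod `N` as well. -/
def transverse (σ : Fin r → Fin (d + 1)) : Cyl d N →+ (Fin r → ZMod N) where
  toFun x a := Fin.snoc (α := fun _ => ZMod N) x.1 (x.2 : ZMod N) (σ a)
  map_zero' := by
    ext a
    induction σ a using Fin.lastCases <;> simp
  map_add' x y := by
    ext a
    simp only [Pi.add_apply]
    induction σ a using Fin.lastCases <;> simp

theorem transverse_projE (σ : Fin r → Fin (d + 1)) (v : Lat d) :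
    transverse σ (projE d N v) = fun a => (v (σ a) : ZMod N) := by
  ext a
  simp only [transverse, projE, AddMonoidHom.coe_mk, ZeroHom.coe_mk]
  induction σ a using Fin.lastCases <;> simp

theorem transverse_add_projE {σ : Fin r → Fin (d + 1)} {x : Cyl d N} {y : Fin r → ZMod N}
    {w : Fin r → ℤ} (hx : transverse σ x = y + fun a => (w a : ZMod N)) (v : Lat d) :
    transverse σ (x + projE d N v) = y + fun a => ((w + v ∘ σ) a : ZMod N) := by
  rw [map_add, hx, transverse_projE, add_assoc]
  congr 1
  ext a
  simp

theorem notMem_preimage_transverse {σ : Fin r → Fin (d + 1)} {x : Cyl d N} {y : Fin r → ZMod N}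
    {w : Fin r → ℤ} (hx : transverse σ x = y + fun a => (w a : ZMod N)) (hw : ∀ a, |w a| < N)
    (hw₀ : w ≠ 0) : x ∉ transverse σ ⁻¹' {y} := by
  intro hxy
  have hcast : (fun a => (w a : ZMod N)) = 0 := add_eq_left.1 (hx.symm.trans hxy)
  refine hw₀ (funext fun a => ?_)
  have hdvd : (N : ℤ) ∣ w a := (ZMod.intCast_zmod_eq_zero_iff_dvd _ _).1 (congrFun hcast a)
  exact Int.eq_zero_of_abs_lt_dvd hdvd (hw a)

theorem IsCylRW.real_hitBy_transverse_le {P : Cyl d N → Measure (ℕ → Cyl d N)}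
    {Q : ZLat r → Measure (ℕ → ZLat r)} [NeZero r] (hP : IsCylRW d N P) (hQ : IsLatRW r Q)
    {σ : Fin r → Fin (d + 1)} (hσ : σ.Injective) {y : Fin r → ZMod N} {n : ℕ} {x : Cyl d N}
    {w : Fin r → ℤ} (hx : transverse σ x = y + fun a => (w a : ZMod N))
    (hw : ∀ a, |w a| + n < N) :
    (P x).real (hitBy (transverse σ ⁻¹' {y}) n) ≤ (Q w).real (hitBy {0} n) := by
  have := hP.1
  have := hQ.1
  have hPw := hP.isRandomWalk
  have hQw := hQ.isRandomWalk
  induction n generalizing x w with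
  | zero =>
    by_cases hw₀ : w ∈ ({0} : Set (ZLat r))
    · exact measureReal_le_one.trans_eq (hQw.real_hitBy_of_mem hw₀ 0).symm
    · rw [hPw.real_hitBy_zero_of_notMem]
      · exact measureReal_nonneg
      · exact notMem_preimage_transverse hx (by simpa using hw) hw₀
  | succ n ih =>
    by_cases hw₀ : w ∈ ({0} : Set (ZLat r))
    · exact measureReal_le_one.trans_eq (hQw.real_hitBy_of_mem hw₀ _).symm
    have hxy : x ∉ transverse σ ⁻¹' {y} :=
      notMem_preimage_transverse hx (fun a => by have := hw a; omega) hw₀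
    let g (v : Fin r → ℤ) : ℝ := (Q (w + v)).real (hitBy {0} n)
    have hg : (Q w).real (hitBy {0} (n + 1)) = 𝔼 q, g (signedUnit q) :=
      hQw.real_hitBy_succ_of_notMem hw₀ n
    -- A step that leaves the selected coordinates fixed only wastes time.
    have hg₀ : g 0 ≤ 𝔼 q, g (signedUnit q) := by
      rw [← hg]
      simp only [g, add_zero]
      exact measureReal_mono (hitBy_mono _ n.le_succ)
    calc (P x).real (hitBy (transverse σ ⁻¹' {y}) (n + 1))
        = 𝔼 p, (P (x + projE d N (signedUnit p))).real (hitBy (transverse σ ⁻¹' {y}) n) :=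
          hPw.real_hitBy_succ_of_notMem hxy n
      _ ≤ 𝔼 p, g (signedUnit p ∘ σ) := by
          gcongr with p
          refine ih (transverse_add_projE hx _) fun a => ?_
          have h₁ := hw a
          have h₂ := abs_add_le (w a) (signedUnit p (σ a))
          have h₃ := abs_signedUnit_apply_le p (σ a)
          simp only [Pi.add_apply, Function.comp_apply]
          push_cast at h₁
          linarith
      _ ≤ (Q w).real (hitBy {0} (n + 1)) := hg ▸ expect_signedUnit_comp_le hσ hg₀

end Transverse

section CoordinateLattices

variable {d N m : ℕ}

theorem projE_add (v w : Lat d) : projE d N (v + w) = projE d N v + projE d N w := by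
  ext <;> simp [projE]

theorem neg_signedUnit {n : ℕ} (p : Fin n × Bool) : -signedUnit p = signedUnit (p.1, !p.2) := by
  obtain ⟨i, _ | _⟩ := p <;> simp [signedUnit, ← Pi.single_neg]

theorem exists_signedUnit_of_mem_bdry {F : Set (Cyl d N)} {z : Cyl d N} (hz : z ∈ bdry d N F) :
    ∃ x ∈ F, ∃ p, z = x + projE d N (signedUnit p) := by
  obtain ⟨-, x, hx, -, e, he, rfl⟩ := hz
  obtain ⟨p, -, rfl⟩ := Finset.mem_image.1 he
  refine ⟨_, hx, (p.1, !p.2), ?_⟩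
  rw [← neg_signedUnit, add_assoc, ← projE_add]
  change z = z + projE d N (signedUnit p + -signedUnit p)
  ext <;> simp [projE]

theorem exists_transverse_of_mem_bdry {F : Set (Cyl d N)} {z : Cyl d N} (hF : F ∈ Lcoll d N m)
    (hz : z ∈ bdry d N F) :
    ∃ (σ : Fin (d + 1 - m) → Fin (d + 1)) (y : Fin (d + 1 - m) → ZMod N)
      (q : Fin (d + 1 - m) × Bool), σ.Injective ∧ F ⊆ transverse σ ⁻¹' {y} ∧
        transverse σ z = y + fun a => (signedUnit q a : ZMod N) := by
  obtain ⟨I, hI, u, rfl⟩ := hF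
  have hIc : Iᶜ.card = d + 1 - m := by rw [Finset.card_compl, hI, Fintype.card_fin]
  let σ := Iᶜ.orderEmbOfFin hIc
  have hσ (a) : σ a ∉ I := Finset.mem_compl.1 (Finset.orderEmbOfFin_mem _ _ a)
  have hsub : (fun v => projE d N (u + v)) '' {v : Lat d | ∀ i ∉ I, v i = 0} ⊆
      transverse σ ⁻¹' {fun a => (u (σ a) : ZMod N)} := by
    rintro _ ⟨v, hv, rfl⟩
    simp only [Set.mem_preimage, Set.mem_singleton_iff, transverse_projE, Pi.add_apply,
      hv _ (hσ _), add_zero]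
  obtain ⟨x, hx, p, rfl⟩ := exists_signedUnit_of_mem_bdry hz
  have hp : p.1 ∉ I := by
    intro hpI
    obtain ⟨v, hv, rfl⟩ := hx
    refine hz.1 ⟨v + signedUnit p, fun i hi => ?_, ?_⟩
    · have hip : i ≠ p.1 := fun h => hi (h ▸ hpI)
      simp [hv i hi, signedUnit, hip]
    · exact (congrArg _ (add_assoc u v _).symm).trans (projE_add _ _)
  obtain ⟨a, ha : σ a = p.1⟩ : p.1 ∈ Set.range σ := by
    simpa [σ, Finset.range_orderEmbOfFin] using hp
  refine ⟨σ, _, (a, p.2), σ.injective, hsub, ?_⟩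
  have hpσ : signedUnit p ∘ σ = signedUnit (a, p.2) := by
    rw [← signedUnit_comp_of_injective σ.injective, Prod.map_apply, ha]
    rfl
  rw [map_add, hsub hx, transverse_projE, ← hpσ]
  rfl

end CoordinateLattices

section ExitTime

variable {d N : ℕ}

theorem sq_add_signedUnit_apply_le {n : ℕ} {t b : ℝ} (ht : |t| + 1 ≤ b) (p : Fin n × Bool)
    (i : Fin n) : (t + signedUnit p i) ^ 2 ≤ b ^ 2 := by
  have hp : |(signedUnit p i : ℝ)| ≤ 1 := by exact_mod_cast abs_signedUnit_apply_le p i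
  refine sq_le_sq.2 (le_trans ?_ (le_abs_self b))
  linarith [abs_add_le t (signedUnit p i)]

theorem expect_sq_signedUnit_last (t : ℝ) :
    (d + 1) * 𝔼 p : Fin (d + 1) × Bool, ((t + signedUnit p (Fin.last d)) ^ 2 - t ^ 2) = 1 := by
  have key := mul_expect_signedUnit_comp (Function.injective_of_subsingleton
    fun _ : Fin 1 => Fin.last d) fun v => (t + v 0) ^ 2
  simp only [Function.comp_apply, Pi.zero_apply, Int.cast_zero, add_zero] at key
  push_cast at key
  rw [key, Fintype.expect_eq_sum_div_card, Fintype.sum_prod_type]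
  simp [signedUnit]
  ring

theorem abs_sub_add_one_le_of_mem_Btl {j : ℤ} {x : Cyl d N} (hx : x ∈ Btl d N j) :
    |x.2 - j * N| + 1 ≤ 2 * (N : ℤ) := by
  obtain ⟨h₁, h₂⟩ := hx
  have : |x.2 - j * N| ≤ 2 * N - 1 := abs_le.2 ⟨by linarith, by linarith⟩
  linarith

theorem IsCylRW.natCast_mul_real_stayIn_Btl_le {P : Cyl d N → Measure (ℕ → Cyl d N)}
    (hP : IsCylRW d N P) (j : ℤ) (M : ℕ) (x : Cyl d N) :
    M * (P x).real (stayIn (Btl d N j) M) ≤ 4 * (d + 1) * (N : ℝ) ^ 2 := by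
  let height (x : Cyl d N) : ℝ := x.2 - j * N
  -- The height performs a lazy walk on `ℤ` whose steps have variance `1 / (d + 1)`.
  let f (x : Cyl d N) : ℝ := (d + 1) * ((2 * N) ^ 2 - height x ^ 2)
  have height_add (x : Cyl d N) (v : Lat d) :
      height (x + projE d N v) = height x + v (Fin.last d) := by
    simp only [height, projE, Prod.snd_add]
    push_cast
    ring
  have hheight {x : Cyl d N} (hx : x ∈ Btl d N j) : |height x| + 1 ≤ 2 * N := by
    simpa [height] using (Int.cast_le (R := ℝ)).2 (abs_sub_add_one_le_of_mem_Btl hx)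
  have hf : ∀ x ∈ Btl d N j, 𝔼 p, f (x + projE d N (signedUnit p)) + 1 ≤ f x := by
    intro x _
    have hstep (p : Fin (d + 1) × Bool) : f (x + projE d N (signedUnit p)) =
        f x - (d + 1) * ((height x + signedUnit p (Fin.last d)) ^ 2 - height x ^ 2) := by
      simp only [f, height_add]
      ring
    simp only [hstep]
    rw [Finset.expect_sub_distrib, Fintype.expect_const, ← Finset.mul_expect,
      expect_sq_signedUnit_last]
    exact (sub_add_cancel _ _).le
  have hf₀ : ∀ x ∈ Btl d N j, ∀ p, 0 ≤ f (x + projE d N (signedUnit p)) := by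
    intro x hx p
    simp only [f, height_add]
    have := sub_nonneg.2 (sq_add_signedUnit_apply_le (hheight hx) p (Fin.last d))
    positivity
  have hf_le : f x ≤ 4 * (d + 1) * (N : ℝ) ^ 2 := by
    have : 0 ≤ (d + 1) * height x ^ 2 := by positivity
    simp only [f]
    linarith
  by_cases hx : x ∈ Btl d N j
  · have hfx : 0 ≤ f x := le_trans (Finset.expect_nonneg fun p _ => hf₀ x hx p) <|
      (le_add_of_nonneg_right zero_le_one).trans (hf x hx)
    exact (hP.isRandomWalk.natCast_mul_real_stayIn_le hf hf₀ M hfx).trans hf_le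
  · rw [hP.isRandomWalk.real_stayIn_of_notMem hx, mul_zero]
    positivity

end ExitTime

section HeatKernel

variable {d N r : ℕ} [NeZero N]

/-- The additive character `v ↦ ∏ a, exp (2πi k a v a / N)` of the discrete torus, for the Fourier
analysis of the transverse walk. -/
noncomputable def torusChar (k : Fin r → ZMod N) : AddChar (Fin r → ZMod N) ℂ :=
  ZMod.stdAddChar.compAddMonoidHom
    (∑ a, (AddMonoidHom.mulLeft (k a)).comp (Pi.evalAddMonoidHom _ a))

theorem torusChar_apply (k v : Fin r → ZMod N) :
    torusChar k v = ZMod.stdAddChar (∑ a, k a * v a) := by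
  simp [torusChar]

theorem torusChar_comm (k v : Fin r → ZMod N) : torusChar k v = torusChar v k := by
  simp only [torusChar_apply, mul_comm]

theorem torusChar_single (k : Fin r → ZMod N) (a : Fin r) (c : ZMod N) :
    torusChar k (Pi.single a c) = ZMod.stdAddChar (k a * c) := by
  simp [torusChar_apply, Pi.single_apply]

theorem torusChar_eq_zero_iff {k : Fin r → ZMod N} : torusChar k = 0 ↔ k = 0 := by
  refine ⟨fun hk => funext fun a => ZMod.injective_stdAddChar ?_, ?_⟩
  · rw [← mul_one (k a), ← torusChar_single, hk]
    simp
  · rintro rfl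
    ext v
    simp [torusChar_apply]

theorem expect_torusChar_apply (v : Fin r → ZMod N) :
    𝔼 k : Fin r → ZMod N, torusChar k v = if v = 0 then 1 else 0 := by
  simp only [torusChar_comm _ v, AddChar.expect_eq_ite, torusChar_eq_zero_iff]

/-- The gap `1 - cos (2πk/N)` of the simple random walk on `ℤ/Nℤ` at frequency `k`. -/
noncomputable def oneSubCos (k : ZMod N) : ℝ := 1 - (ZMod.stdAddChar k).re

theorem oneSubCos_nonneg (k : ZMod N) : 0 ≤ oneSubCos k := by
  have := (Complex.re_le_norm _).trans_eq (AddChar.norm_apply (ZMod.stdAddChar (N := N)) k)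
  exact sub_nonneg.2 this

theorem oneSubCos_le_two (k : ZMod N) : oneSubCos k ≤ 2 := by
  have := (Complex.abs_re_le_norm _).trans_eq (AddChar.norm_apply (ZMod.stdAddChar (N := N)) k)
  have := neg_le_of_abs_le this
  unfold oneSubCos
  linarith

theorem stdAddChar_add_stdAddChar_neg (k : ZMod N) :
    ZMod.stdAddChar k + ZMod.stdAddChar (-k) = 2 - 2 * (oneSubCos k : ℂ) := by
  rw [AddChar.map_neg_eq_conj, Complex.add_conj, oneSubCos]
  push_cast
  ring

theorem torusChar_signedUnit (k : Fin r → ZMod N) (q : Fin r × Bool) :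
    torusChar k (fun a => (signedUnit q a : ZMod N)) =
      ZMod.stdAddChar (if q.2 then k q.1 else -k q.1) := by
  obtain ⟨a, b⟩ := q
  have : (fun a' => (signedUnit (a, b) a' : ZMod N)) = Pi.single a (if b then 1 else -1) := by
    ext a'
    by_cases h : a' = a <;> cases b <;> simp [signedUnit, h]
  rw [this, torusChar_single]
  cases b <;> simp

theorem natCast_mul_expect_torusChar_signedUnit (k : Fin r → ZMod N) :
    r * 𝔼 q : Fin r × Bool, (torusChar k (fun a => (signedUnit q a : ZMod N)) - 1) =
      -∑ a, (oneSubCos (k a) : ℂ) := by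
  rcases Nat.eq_zero_or_pos r with rfl | hr
  · simp
  have hr' : (r : ℂ) ≠ 0 := Nat.cast_ne_zero.2 hr.ne'
  have hpair (a : Fin r) : (ZMod.stdAddChar (k a) - 1 : ℂ) + (ZMod.stdAddChar (-k a) - 1) =
      -2 * oneSubCos (k a) := by
    linear_combination stdAddChar_add_stdAddChar_neg (k a)
  rw [Fintype.expect_eq_sum_div_card, Fintype.sum_prod_type]
  simp only [torusChar_signedUnit, Fintype.sum_bool, if_true, Bool.false_eq_true, if_false, hpair,
    ← Finset.mul_sum, Fintype.card_prod, Fintype.card_fin, Fintype.card_bool]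
  push_cast
  field_simp

theorem expect_torusChar_projE_signedUnit {σ : Fin r → Fin (d + 1)} (hσ : σ.Injective)
    (k : Fin r → ZMod N) :
    𝔼 p, torusChar k (transverse σ (projE d N (signedUnit p))) =
      ((1 - (∑ a, oneSubCos (k a)) / (d + 1) : ℝ) : ℂ) := by
  let g (v : Fin r → ℤ) : ℂ := torusChar k fun a => (v a : ZMod N)
  have hg₀ : g 0 = 1 := by simp [g, torusChar_apply]
  have key : ((d + 1 : ℕ) : ℂ) * (𝔼 p, g (signedUnit p ∘ σ) - 1) = -∑ a, (oneSubCos (k a) : ℂ) := by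
    rw [← natCast_mul_expect_torusChar_signedUnit, ← hg₀, ← mul_expect_signedUnit_comp hσ g,
      Finset.expect_sub_distrib, Fintype.expect_const]
  have key' := (eq_div_iff (Nat.cast_ne_zero.2 d.succ_ne_zero)).2 ((mul_comm _ _).trans key)
  calc 𝔼 p, torusChar k (transverse σ (projE d N (signedUnit p)))
      = 𝔼 p, g (signedUnit p ∘ σ) := by simp only [transverse_projE]; rfl
    _ = ((1 - (∑ a, oneSubCos (k a)) / (d + 1) : ℝ) : ℂ) := by
        push_cast at key' ⊢
        linear_combination key'

theorem abs_one_sub_le_exp {D u : ℝ} (hD : 1 ≤ D) (hu₀ : 0 ≤ u) (hu : u ≤ 2 - 2 / D) :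
    |1 - u| ≤ Real.exp (-(u / D)) := by
  have hle : u / D ≤ u := div_le_self hu₀ hD
  have hge : u / D ≤ 2 / D - 2 / D ^ 2 := by
    calc u / D ≤ (2 - 2 / D) / D := by gcongr
      _ = 2 / D - 2 / D ^ 2 := by ring
  have : 0 ≤ 2 / D ^ 2 := by positivity
  refine (abs_le.2 ⟨?_, ?_⟩).trans (Real.one_sub_le_exp_neg _) <;> linarith

-- As `r ≤ d`, some coordinate is missed by `σ`; the transverse walk is therefore lazy, which keeps
-- its eigenvalues away from `-1`.
theorem norm_expect_torusChar_projE_signedUnit_le {σ : Fin r → Fin (d + 1)} (hσ : σ.Injective)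
    (hr : r ≤ d) (k : Fin r → ZMod N) :
    ‖𝔼 p, torusChar k (transverse σ (projE d N (signedUnit p)))‖ ≤
      Real.exp (-((∑ a, oneSubCos (k a)) / (d + 1) ^ 2)) := by
  have hsum : ∑ a, oneSubCos (k a) ≤ 2 * d := by
    calc ∑ a, oneSubCos (k a) ≤ ∑ _a : Fin r, 2 := by gcongr; exact oneSubCos_le_two _
      _ = 2 * r := by simp [mul_comm]
      _ ≤ 2 * d := by gcongr
  rw [expect_torusChar_projE_signedUnit hσ, Complex.norm_real, Real.norm_eq_abs, pow_two, ← div_div]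
  refine abs_one_sub_le_exp (le_add_of_nonneg_left d.cast_nonneg)
    (div_nonneg (Finset.sum_nonneg fun a _ => oneSubCos_nonneg _) (by positivity)) ?_
  calc (∑ a, oneSubCos (k a)) / (d + 1) ≤ 2 * d / (d + 1) := by gcongr
    _ = 2 - 2 / (d + 1) := by field_simp; ring

theorem IsCylRW.real_coord_mem_transverse_le_expect {P : Cyl d N → Measure (ℕ → Cyl d N)}
    (hP : IsCylRW d N P) {σ : Fin r → Fin (d + 1)} (hσ : σ.Injective) (hr : r ≤ d)
    (y : Fin r → ZMod N) (n : ℕ) (x : Cyl d N) :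
    (P x).real {ω | ω n ∈ transverse σ ⁻¹' {y}} ≤
      (𝔼 k : ZMod N, Real.exp (-(n / (d + 1) ^ 2 * oneSubCos k))) ^ r := by
  have hind (x : Cyl d N) : (transverse σ ⁻¹' {y}).indicator 1 x =
      𝔼 k, torusChar k (-y) * (torusChar k).compAddMonoidHom (transverse σ) x := by
    simp only [AddChar.compAddMonoidHom_apply, ← AddChar.map_add_eq_mul, expect_torusChar_apply,
      neg_add_eq_zero, Set.indicator_apply, Set.mem_preimage, Set.mem_singleton_iff,
      eq_comm (a := y), Pi.one_apply]
  calc (P x).real {ω | ω n ∈ transverse σ ⁻¹' {y}}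
      = ‖((P x).real {ω | ω n ∈ transverse σ ⁻¹' {y}} : ℂ)‖ := by
        rw [Complex.norm_real, Real.norm_of_nonneg measureReal_nonneg]
    _ = ‖𝔼 k, torusChar k (-y) * (𝔼 p, torusChar k (transverse σ (projE d N (signedUnit p)))) ^ n *
          torusChar k (transverse σ x)‖ := by
        rw [hP.isRandomWalk.real_coord_eq_expect_char hind]
        rfl
    _ ≤ 𝔼 k : Fin r → ZMod N, Real.exp (-((∑ a, oneSubCos (k a)) / (d + 1) ^ 2)) ^ n := by
        refine (RCLike.norm_expect_le (K := ℂ)).trans (Finset.expect_le_expect fun k _ => ?_)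
        rw [norm_mul, norm_mul, norm_pow, AddChar.norm_apply, AddChar.norm_apply, one_mul, mul_one]
        gcongr
        exact norm_expect_torusChar_projE_signedUnit_le hσ hr k
    _ = 𝔼 k : Fin r → ZMod N, ∏ a, Real.exp (-(n / (d + 1) ^ 2 * oneSubCos (k a))) := by
        simp only [← Real.exp_nat_mul, ← Real.exp_sum, Finset.sum_neg_distrib, ← Finset.mul_sum]
        refine Finset.expect_congr rfl fun k _ => ?_
        congr 1
        ring
    _ = (𝔼 k : ZMod N, Real.exp (-(n / (d + 1) ^ 2 * oneSubCos k))) ^ r := by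
        rw [Finset.expect_pow, Fintype.piFinset_univ]

end HeatKernel

section Gaussian

variable {N : ℕ} [NeZero N]

theorem eight_mul_sq_le_oneSubCos (k : ZMod N) :
    8 * (k.valMinAbs.natAbs / N : ℝ) ^ 2 ≤ oneSubCos k := by
  have hN : (0 : ℝ) < N := Nat.cast_pos.2 (NeZero.pos N)
  set t : ℝ := 2 * Real.pi * k.valMinAbs / N with ht
  have hre : (ZMod.stdAddChar k).re = Real.cos t := by
    have harg : (2 * Real.pi * Complex.I * k.valMinAbs / N : ℂ) = (t : ℂ) * Complex.I := by
      rw [ht]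
      push_cast
      ring
    rw [← Complex.exp_ofReal_mul_I_re, ← harg, ← ZMod.stdAddChar_coe, ZMod.coe_valMinAbs]
  have habs : (k.valMinAbs.natAbs : ℝ) = |(k.valMinAbs : ℝ)| := by
    rw [Nat.cast_natAbs, Int.cast_abs]
  have hhalf : 2 * |(k.valMinAbs : ℝ)| ≤ N := by
    rw [← habs]
    exact_mod_cast (Nat.mul_le_mul_left 2 k.natAbs_valMinAbs_le).trans (Nat.mul_div_le N 2)
  have htπ : |t| ≤ Real.pi := by
    rw [ht, abs_div, abs_mul, abs_of_pos Real.two_pi_pos, abs_of_pos hN, div_le_iff₀ hN]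
    nlinarith [Real.pi_pos]
  have := Real.cos_le_one_sub_mul_cos_sq htπ
  have hsq : 2 / Real.pi ^ 2 * t ^ 2 = 8 * (k.valMinAbs.natAbs / N : ℝ) ^ 2 := by
    rw [habs, ht, div_pow |(k.valMinAbs : ℝ)|, sq_abs]
    field_simp
    ring
  rw [oneSubCos, hre]
  linarith

theorem natAbs_valMinAbs_eq_val_or (k : ZMod N) :
    k.valMinAbs.natAbs = k.val ∨ k.valMinAbs.natAbs = (-k).val := by
  rw [ZMod.valMinAbs_natAbs_eq_min, ZMod.neg_val]
  split_ifs with hk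
  · simp [hk]
  · exact min_choice _ _

theorem expect_comp_natAbs_valMinAbs_le {f : ℕ → ℝ} (hf : ∀ n, 0 ≤ f n) (hf' : Summable f) :
    𝔼 k : ZMod N, f k.valMinAbs.natAbs ≤ 2 / N * ∑' n, f n := by
  have hval : ∑ k : ZMod N, f k.val ≤ ∑' n, f n := by
    rw [← tsum_fintype (L := .unconditional _)]
    exact tsum_comp_le_tsum_of_inj hf' hf (ZMod.val_injective N)
  have hneg : ∑ k : ZMod N, f (-k).val ≤ ∑' n, f n := by
    exact (Equiv.sum_comp (Equiv.neg (ZMod N)) fun k => f k.val).trans_le hval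
  rw [Fintype.expect_eq_sum_div_card, ZMod.card, div_mul_eq_mul_div]
  gcongr
  calc ∑ k : ZMod N, f k.valMinAbs.natAbs ≤ ∑ k : ZMod N, (f k.val + f (-k).val) := by
        gcongr with k
        rcases natAbs_valMinAbs_eq_val_or k with h | h <;> rw [h]
        · exact le_add_of_nonneg_right (hf _)
        · exact le_add_of_nonneg_left (hf _)
    _ ≤ 2 * ∑' n, f n := by rw [Finset.sum_add_distrib]; linarith

theorem tsum_exp_neg_nat_mul_le {s : ℝ} (hs : 0 < s) :
    ∑' n : ℕ, Real.exp (-s) ^ n ≤ 1 + 1 / s := by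
  have hlt : Real.exp (-s) < 1 := Real.exp_lt_one_iff.2 (neg_lt_zero.2 hs)
  rw [tsum_geometric_of_lt_one (Real.exp_pos _).le hlt]
  have h := Real.add_one_le_exp s
  have : Real.exp (-s) ≤ 1 / (1 + s) := by
    rw [Real.exp_neg, ← one_div]
    gcongr
    linarith
  rw [inv_eq_one_div, div_le_iff₀ (by linarith)]
  have : (1 + 1 / s) * (1 - 1 / (1 + s)) = 1 := by field_simp; ring
  have : 0 ≤ 1 + 1 / s := by positivity
  nlinarith

theorem expect_exp_neg_mul_oneSubCos_le {b : ℝ} (hb : 0 < b) :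
    𝔼 k : ZMod N, Real.exp (-(b ^ 2 * oneSubCos k)) ≤ 2 * Real.exp 1 * (1 / N + 1 / b) := by
  have hN : (0 : ℝ) < N := Nat.cast_pos.2 (NeZero.pos N)
  have hs : 0 < b / N := by positivity
  have hterm (k : ZMod N) : Real.exp (-(b ^ 2 * oneSubCos k)) ≤
      Real.exp 1 * Real.exp (-(b / N)) ^ k.valMinAbs.natAbs := by
    rw [← Real.exp_nat_mul, ← Real.exp_add]
    gcongr
    set t : ℝ := k.valMinAbs.natAbs / N with ht
    have hgap : b ^ 2 * (8 * t ^ 2) ≤ b ^ 2 * oneSubCos k := by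
      gcongr
      exact eight_mul_sq_le_oneSubCos k
    have hlin : (k.valMinAbs.natAbs : ℝ) * -(b / N) = -(b * t) := by
      rw [ht]
      ring
    rw [hlin]
    nlinarith [sq_nonneg (2 * (b * t) - 1), sq_nonneg (b * t)]
  have hsum : Summable fun n : ℕ => Real.exp (-(b / N)) ^ n :=
    summable_geometric_of_lt_one (Real.exp_pos _).le (Real.exp_lt_one_iff.2 (neg_lt_zero.2 hs))
  calc 𝔼 k : ZMod N, Real.exp (-(b ^ 2 * oneSubCos k))
      ≤ 𝔼 k : ZMod N, Real.exp 1 * Real.exp (-(b / N)) ^ k.valMinAbs.natAbs :=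
        Finset.expect_le_expect fun k _ => hterm k
    _ ≤ Real.exp 1 * (2 / N * (1 + 1 / (b / N))) := by
        rw [← Finset.mul_expect]
        gcongr
        exact (expect_comp_natAbs_valMinAbs_le (fun n => by positivity) hsum).trans
          (by gcongr; exact tsum_exp_neg_nat_mul_le hs)
    _ = 2 * Real.exp 1 * (1 / N + 1 / b) := by field_simp

end Gaussian

section Tail

theorem exists_forall_sum_Ioc_lt {f : ℕ → ℝ} (hf : Summable f) {ε : ℝ} (hε : 0 < ε) :
    ∃ n₀, ∀ M, ∑ n ∈ Finset.Ioc n₀ M, f n < ε := by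
  obtain ⟨s, hs⟩ := summable_iff_vanishing_norm.1 hf ε hε
  refine ⟨s.sup id, fun M => (le_abs_self _).trans_lt (hs _ ?_)⟩
  refine Finset.disjoint_left.2 fun n hn hns => ?_
  exact (Finset.mem_Ioc.1 hn).1.not_ge (Finset.le_sup (f := id) hns)

theorem summable_div_sqrt_pow_three (C : ℝ) : Summable fun n : ℕ => (C / √n) ^ 3 := by
  have h := (Real.summable_one_div_nat_rpow.2 (by norm_num : (1 : ℝ) < 3 / 2)).mul_left (C ^ 3)
  refine h.congr fun n => ?_
  rw [div_pow, Real.sqrt_eq_rpow, ← Real.rpow_mul_natCast n.cast_nonneg, mul_one_div]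
  norm_num

end Tail

section Limit

variable {d N r m : ℕ} {P : Cyl d N → Measure (ℕ → Cyl d N)}

theorem IsCylRW.real_coord_mem_transverse_le [NeZero N] (hP : IsCylRW d N P)
    {σ : Fin r → Fin (d + 1)} (hσ : σ.Injective) (hr : r ≤ d) (y : Fin r → ZMod N) {A n : ℕ}
    (hn : 0 < n) (hnA : n ≤ A * N ^ 2) (x : Cyl d N) :
    (P x).real {ω | ω n ∈ transverse σ ⁻¹' {y}} ≤
      (2 * Real.exp 1 * (√A + (d + 1)) / √n) ^ r := by
  have hN : (0 : ℝ) < N := Nat.cast_pos.2 (NeZero.pos N)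
  have hsqrt : 0 < √(n : ℝ) := Real.sqrt_pos.2 (Nat.cast_pos.2 hn)
  have hb : n / (d + 1 : ℝ) ^ 2 = (√n / (d + 1)) ^ 2 := by
    rw [div_pow, Real.sq_sqrt n.cast_nonneg]
  have hinv : 1 / (N : ℝ) ≤ √A / √n := by
    rw [div_le_div_iff₀ hN hsqrt, one_mul, ← Real.sqrt_sq hN.le, ← Real.sqrt_mul A.cast_nonneg]
    exact Real.sqrt_le_sqrt (by exact_mod_cast hnA)
  calc (P x).real {ω | ω n ∈ transverse σ ⁻¹' {y}}
      ≤ (𝔼 k : ZMod N, Real.exp (-((√n / (d + 1)) ^ 2 * oneSubCos k))) ^ r :=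
        hb ▸ hP.real_coord_mem_transverse_le_expect hσ hr y n x
    _ ≤ (2 * Real.exp 1 * (1 / N + 1 / (√n / (d + 1)))) ^ r := by
        gcongr
        exact expect_exp_neg_mul_oneSubCos_le (by positivity)
    _ ≤ (2 * Real.exp 1 * (√A / √n + 1 / (√n / (d + 1)))) ^ r := by gcongr
    _ = (2 * Real.exp 1 * (√A + (d + 1)) / √n) ^ r := by
        congr 1
        field_simp

theorem IsCylRW.real_entT_lt_exitT_Btl_le {Q : ZLat (d + 1 - m) → Measure (ℕ → ZLat (d + 1 - m))}
    (hd : 3 ≤ d) (hm : m ≤ d - 2) (hP : IsCylRW d N P) (hQ : IsLatRW (d + 1 - m) Q) (j : ℤ)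
    {F : Set (Cyl d N)} (hF : F ∈ Lcoll d N m) {z : Cyl d N} (hz : z ∈ bdry d N F) {A n₀ : ℕ}
    (hA : 0 < A) (hN : n₀ + 1 < N) :
    (P z).real {ω | entT F ω < exitT (Btl d N j) ω} ≤ retProb (d + 1 - m) Q +
      ∑ n ∈ Finset.Ioc n₀ (A * N ^ 2), (2 * Real.exp 1 * (√A + (d + 1)) / √n) ^ 3 +
        4 * (d + 1) / A := by
  have : NeZero N := ⟨by omega⟩
  have : NeZero (d + 1 - m) := ⟨by omega⟩
  have := hP.1
  obtain ⟨σ, y, q, hσ, hFσ, hzσ⟩ := exists_transverse_of_mem_bdry hF hz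
  let ι : Fin 3 → Fin (d + 1 - m) := Fin.castLE (by omega)
  have hσι : (σ ∘ ι).Injective := hσ.comp (Fin.castLE_injective _)
  refine (real_entT_lt_exitT_le _ hFσ _ n₀ (A * N ^ 2)).trans (add_le_add (add_le_add ?_ ?_) ?_)
  · refine (hP.real_hitBy_transverse_le hQ hσ hzσ fun a => ?_).trans
      (hQ.real_hitBy_signedUnit_le_retProb q n₀)
    have := abs_signedUnit_apply_le q a
    omega
  · gcongr with n hn
    obtain ⟨hn₀, hnA⟩ := Finset.mem_Ioc.1 hn
    have hsub : {ω : ℕ → Cyl d N | ω n ∈ transverse σ ⁻¹' {y}} ⊆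
        {ω | ω n ∈ transverse (σ ∘ ι) ⁻¹' {y ∘ ι}} := fun ω hω => congrArg (· ∘ ι) hω
    exact (measureReal_mono hsub).trans
      (hP.real_coord_mem_transverse_le hσι hd (y ∘ ι) (n₀.zero_le.trans_lt hn₀) hnA z)
  · have hA' : (0 : ℝ) < A := Nat.cast_pos.2 hA
    have hN' : (0 : ℝ) < N := Nat.cast_pos.2 (NeZero.pos N)
    have key := hP.natCast_mul_real_stayIn_Btl_le j (A * N ^ 2) z
    push_cast at key
    rw [le_div_iff₀ hA']
    refine le_of_mul_le_mul_right (le_of_eq_of_le ?_ key) (pow_pos hN' 2)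
    ring

theorem eventually_qNval_le {Q : ZLat (d + 1 - m) → Measure (ℕ → ZLat (d + 1 - m))}
    (hd : 3 ≤ d) (hm : m ≤ d - 2) (hQ : IsLatRW (d + 1 - m) Q)
    {Pl : ∀ N : ℕ, Cyl d N → Measure (ℕ → Cyl d N)} (hPl : ∀ N : ℕ, IsCylRW d N (Pl N))
    (j : ℕ → ℤ) {ε : ℝ} (hε : 0 < ε) :
    ∀ᶠ N in atTop, qNval d N m (Pl N) (j N) ≤ retProb (d + 1 - m) Q + ε := by
  obtain ⟨A, hA⟩ := exists_nat_gt (4 * (d + 1) / (ε / 2))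
  have hA₀ : (0 : ℝ) < A := lt_of_le_of_lt (by positivity) hA
  have hexit : 4 * (d + 1) / (A : ℝ) < ε / 2 := (div_lt_comm₀ (by positivity) hA₀).1 hA
  obtain ⟨n₀, hn₀⟩ := exists_forall_sum_Ioc_lt
    (summable_div_sqrt_pow_three (2 * Real.exp 1 * (√A + (d + 1)))) (half_pos hε)
  filter_upwards [eventually_gt_atTop (n₀ + 1)] with N hN
  refine Real.sSup_le ?_ (add_nonneg ENNReal.toReal_nonneg hε.le)
  rintro _ ⟨F, hF, z, hz, rfl⟩
  have := (hPl N).real_entT_lt_exitT_Btl_le hd hm hQ (j N) hF hz (Nat.cast_pos.1 hA₀) hN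
  exact this.trans (by linarith [hn₀ (A * N ^ 2)])

theorem qNval_nonneg (d N m : ℕ) (P : Cyl d N → Measure (ℕ → Cyl d N)) (j : ℤ) :
    0 ≤ qNval d N m P j := by
  refine Real.sSup_nonneg ?_
  rintro _ ⟨F, -, z, -, rfl⟩
  exact ENNReal.toReal_nonneg

end Limit

theorem statement_6_general (d m : ℕ) (hd : 3 ≤ d) (hm : m ≤ d - 2)
    (Q : ZLat (d + 1 - m) → Measure (ℕ → ZLat (d + 1 - m))) (hQ : IsLatRW (d + 1 - m) Q)
    (Pl : ∀ N : ℕ, Cyl d N → Measure (ℕ → Cyl d N))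
    (hPl : ∀ N : ℕ, IsCylRW d N (Pl N)) (j : ℕ → ℤ) :
    limsup (fun N : ℕ => qNval d N m (Pl N) (j N)) atTop ≤ retProb (d + 1 - m) Q := by
  refine le_of_forall_pos_le_add fun ε hε =>
    limsup_le_of_le ?_ (eventually_qNval_le hd hm hQ hPl j hε)
  exact isCoboundedUnder_le_of_le _ fun N => qNval_nonneg d N m (Pl N) (j N)

/-- **Lemma 1.4.** For `d ≥ 3` and `1 ≤ m ≤ d-2`, `limsup_N q_N ≤ q(d+1-m)`. -/
theorem statement_6 (d m : ℕ) (hd : 3 ≤ d) (hm1 : 1 ≤ m) (hm2 : m ≤ d - 2)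
    (Q : ZLat (d + 1 - m) → Measure (ℕ → ZLat (d + 1 - m))) (hQ : IsLatRW (d + 1 - m) Q)
    (Pl : ∀ N : ℕ, Cyl d N → Measure (ℕ → Cyl d N))
    (hPl : ∀ N : ℕ, IsCylRW d N (Pl N)) :
    limsup (fun N : ℕ => qNval d N m (Pl N) 0) atTop ≤ retProb (d + 1 - m) Q :=
  statement_6_general d m hd hm2 Q hQ Pl hPl fun _ => 0

end DiscCyl
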